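/- (Necessity of supermodularity.) Let d ≥ 2. Let H : [0,∞) → ℝ be nonincreasing, not identically zero, and satisfy r^{d−1} H(r) → 0 as r → ∞. Let G : [0,∞)×[0,∞) → ℝ be Borel measurable with G(s,0) = G(0,t) = 0 for all s, t ≥ 0. If for all finitely supported u, v : ℤ^d → [0,∞) one has Σ_{x,y∈ℤ^d} G(u(x), v(y)) H(d(x,y)) ≤ Σ_{x,y∈ℤ^d} G(u*(x), v*(y)) H(d(x,y)), then G is supermodular. -/

import Mathlib

open Filter Topology

noncomputable section

abbrev ZLat (d : ℕ) := Fin d → ℤ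

def stdVec (d : ℕ) (i : Fin d) : Fin d → ℝ := fun j => if j = i then 1 else 0

/-- The set of directions E⃗ ⊆ ℝ^d. -/
def Evec (d : ℕ) : Set (Fin d → ℝ) :=
  {e | (∃ i, e = stdVec d i) ∨
    (∃ i j : Fin d, i < j ∧ e = fun k => (stdVec d i k + stdVec d j k) / 2) ∨
    (∃ i j : Fin d, i < j ∧ e = fun k => (stdVec d i k - stdVec d j k) / 2)}

/-- A fixed enumeration of E⃗ (for d = 2 it is e₁, e₂, (e₁+e₂)/2, (e₁-e₂)/2). -/
def EvecList (d : ℕ) : List (Fin d → ℝ) :=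
  ((List.finRange d).map (stdVec d)) ++
  ((List.finRange d).flatMap fun i => (List.finRange d).filterMap fun j =>
    if i < j then some (fun k => (stdVec d i k + stdVec d j k) / 2) else none) ++
  ((List.finRange d).flatMap fun i => (List.finRange d).filterMap fun j =>
    if i < j then some (fun k => (stdVec d i k - stdVec d j k) / 2) else none)

/-- The n-th largest value of `u`, counted with multiplicity (1-indexed). -/
def nthLargest {α : Type*} (u : α → NNReal) (n : ℕ) : NNReal :=
  sSup {t | ∃ Ω : Finset α, Ω.card = n ∧ ∀ x ∈ Ω, t ≤ u x}

/-- The 1-indexed position of the point with doubled coordinate `m` in the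
spiral order 0, 1, −1, 2, −2, … (for even m) resp. 1/2, −1/2, 3/2, −3/2, … (for odd m). -/
def posIdx (m : ℤ) : ℕ := (if 0 < m then m else 1 - m).toNat

/-- `x` and `y` lie on a common line with direction `e`. -/
def sameLine {d : ℕ} (e : Fin d → ℝ) (x y : ZLat d) : Prop :=
  ∃ c : ℝ, (fun i => (x i : ℝ) - (y i : ℝ)) = c • e

/-- Twice the inner product ⟨e, x⟩, as an integer. -/
def pairing {d : ℕ} (e : Fin d → ℝ) (x : ZLat d) : ℤ :=
  ⌊2 * ∑ i, e i * (x i : ℝ)⌋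

/-- One-step rearrangement `R_e`. -/
def stepR {d : ℕ} (e : Fin d → ℝ) (u : ZLat d → NNReal) : ZLat d → NNReal :=
  fun x => nthLargest (fun y : {y : ZLat d // sameLine e x y} => u y.1) (posIdx (pairing e x))

/-- `R^k u` : k successive one-step rearrangements cycling through the fixed enumeration. -/
def iterR (d : ℕ) (u : ZLat d → NNReal) : ℕ → ZLat d → NNReal
  | 0 => u
  | k + 1 => stepR ((EvecList d).getD (k % (EvecList d).length) 0) (iterR d u k)

/-- The Schwarz rearrangement on ℤ^d : pointwise limit of `R^k u`. -/
def RZd (d : ℕ) (u : ZLat d → NNReal) : ZLat d → NNReal :=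
  fun x => limUnder atTop fun k => iterR d u k x

def Admissible {α : Type*} (u : α → NNReal) : Prop :=
  ∀ t : NNReal, 0 < t → {x | t < u x}.Finite

def Equimeasurable {α : Type*} (u v : α → NNReal) : Prop :=
  ∀ t : NNReal, 0 < t → Nonempty ({x | t < u x} ≃ {x | t < v x})

/-- Graph distance (ℓ¹ distance) on the lattice ℤ^d. -/
def latDist {d : ℕ} (x y : ZLat d) : ℕ := ∑ i, (x i - y i).natAbs

/-- The i-th standard basis vector of ℤ^d. -/
def latE {d : ℕ} (i : Fin d) : ZLat d := fun j => if j = i then 1 else 0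

/-- ‖∇u‖_p^p : the p-Sobolev energy, summing over each edge {x, x+e_i} once. -/
def gradEnergy (d : ℕ) (p : ℝ) (u : ZLat d → NNReal) : ENNReal :=
  ∑' (x : ZLat d) (i : Fin d), ENNReal.ofReal (|(u (x + latE i) : ℝ) - (u x : ℝ)| ^ p)

/-- ‖∇u‖_p. -/
def gradNorm (d : ℕ) (p : ℝ) (u : ZLat d → NNReal) : ENNReal :=
  gradEnergy d p u ^ (1 / p)

/-- Graph automorphism of the lattice graph ℤ^d. -/
def IsLatAuto {d : ℕ} (σ : ZLat d ≃ ZLat d) : Prop :=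
  ∀ x y : ZLat d, latDist (σ x) (σ y) = 1 ↔ latDist x y = 1

def Supermodular (G : NNReal → NNReal → NNReal) : Prop :=
  ∀ s t s₀ t₀ : NNReal, G (s + s₀) t + G s (t + t₀) ≤ G (s + s₀) (t + t₀) + G s t

def StrictlySupermodular (G : NNReal → NNReal → NNReal) : Prop :=
  ∀ s t s₀ t₀ : NNReal, 0 < s₀ → 0 < t₀ →
    G (s + s₀) t + G s (t + t₀) < G (s + s₀) (t + t₀) + G s t

/-- The values of `u` are strictly decreasing: a₁ > a₂ > a₃ > ⋯ . -/
def StrictRan {α : Type*} (u : α → NNReal) : Prop :=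
  ∀ n : ℕ, 0 < n → nthLargest u (n + 1) < nthLargest u n


/-!
Let `B` be a large box, `q` a point of `B` on the first coordinate axis, and test the inequality on
`u = s 𝟙_B + s₀ 𝟙_{0}` and `v = t 𝟙_B + t₀ 𝟙_{q}`. Every direction of `E⃗` induces a lattice
reflection preserving `B`, so a bump over `B` centred at `0` is fixed by each `R_e`; hence `u* = u`,
and the very first step already moves the bump of `v` from `q` to `0`. The inequality then reads
`0 ≤ (G(s, t+t₀) - G(s, t)) ∑_{x ∈ B} (H(d(x,0)) - H(d(x,q))) + D (H(0) - H(d(0,q)))`, where `D` is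
the supermodularity defect of `G`. The sum over `B` only sees a boundary layer of `O(r^{d-1})`
points at distance at least `r` from `0`, so it vanishes as `B` grows, and `D ≥ 0` follows by
choosing `q` with `H(d(0,q)) < H(0)`.
-/

section NthLargest

variable {α β : Type*}

lemma nthLargest_comp_equiv (σ : α ≃ β) (u : β → NNReal) (n : ℕ) :
    nthLargest (u ∘ σ) n = nthLargest u n := by
  unfold nthLargest
  congr 1
  ext t
  refine (Equiv.finsetCongr σ).exists_congr fun Ω => ?_
  simp [σ.surjective.forall]

lemma nthLargest_eq_of_bijOn {u : α → NNReal} {pos : α → ℕ}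
    (hpos : Set.BijOn pos Set.univ (Set.Ici 1)) (hu : ∀ x y, pos x ≤ pos y → u y ≤ u x) (x : α) :
    nthLargest u (pos x) = u x := by
  classical
  refine IsGreatest.csSup_eq ⟨⟨(Finset.Icc 1 (pos x)).preimage pos
    (hpos.injOn.mono (Set.subset_univ _)), ?_, fun y hy => ?_⟩, ?_⟩
  · rw [Finset.card_preimage, Finset.filter_true_of_mem, Nat.card_Icc, Nat.add_sub_cancel]
    intro k hk
    obtain ⟨y, -, hy⟩ := hpos.surjOn (Finset.mem_Icc.1 hk).1
    exact ⟨y, hy⟩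
  · exact hu y x (Finset.mem_Icc.1 (Finset.mem_preimage.1 hy)).2
  · rintro t ⟨Ω, hΩ, ht⟩
    obtain ⟨y, hy, hxy⟩ : ∃ y ∈ Ω, pos x ≤ pos y := by
      by_contra! hlt
      have hle : Ω.card ≤ (Finset.Ico 1 (pos x)).card :=
        Finset.card_le_card_of_injOn pos
          (fun y hy => Finset.mem_Ico.2 ⟨hpos.mapsTo (Set.mem_univ y), hlt y hy⟩)
          (hpos.injOn.mono (Set.subset_univ _))
      have hx : 1 ≤ pos x := hpos.mapsTo (Set.mem_univ x)
      rw [Nat.card_Ico] at hle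
      omega
    exact (ht y hy).trans (hu x y hxy)

end NthLargest

section SpiralOrder

lemma abs_le_abs_of_posIdx_le {m n : ℤ} (hmn : m % 2 = n % 2) (h : posIdx m ≤ posIdx n) :
    |m| ≤ |n| := by
  unfold posIdx at h
  rw [Int.abs_eq_natAbs, Int.abs_eq_natAbs]
  split_ifs at h <;> omega

lemma bijOn_posIdx_add_two_mul (m : ℤ) :
    Set.BijOn (fun k : ℤ => posIdx (m + 2 * k)) Set.univ (Set.Ici 1) := by
  refine ⟨fun k _ => ?_, fun k _ l _ hkl => ?_, fun p hp => ?_⟩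
  · simp only [posIdx, Set.mem_Ici]
    split_ifs <;> omega
  · simp only [posIdx] at hkl
    split_ifs at hkl <;> omega
  · simp only [Set.mem_Ici] at hp
    obtain hpar | hpar : (m - p) % 2 = 0 ∨ (m - p) % 2 = 1 := Int.emod_two_eq_zero_or_one _
    · refine ⟨(p - m) / 2, Set.mem_univ _, ?_⟩
      simp only [posIdx]
      split_ifs <;> omega
    · refine ⟨(1 - p - m) / 2, Set.mem_univ _, ?_⟩
      simp only [posIdx]
      split_ifs <;> omega

end SpiralOrder

section Step

variable {d : ℕ} {e : Fin d → ℝ}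

lemma sameLine_equivalence (e : Fin d → ℝ) : Equivalence (sameLine e) where
  refl x := ⟨0, by ext i; simp⟩
  symm := by
    rintro x y ⟨c, hc⟩
    refine ⟨-c, ?_⟩
    rw [neg_smul, ← hc]
    ext i
    simp
  trans := by
    rintro x y z ⟨c, hc⟩ ⟨c', hc'⟩
    refine ⟨c + c', ?_⟩
    rw [add_smul, ← hc, ← hc']
    ext i
    simp

lemma stepR_comp_equiv {σ : ZLat d ≃ ZLat d} (hσ : ∀ y, sameLine e y (σ y))
    (u : ZLat d → NNReal) : stepR e (u ∘ σ) = stepR e u := by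
  have hE := sameLine_equivalence e
  funext x
  have hline (y : ZLat d) : sameLine e x y ↔ sameLine e x (σ y) :=
    ⟨fun h => hE.trans h (hσ y), fun h => hE.trans h (hE.symm (hσ y))⟩
  exact nthLargest_comp_equiv (σ.subtypeEquiv hline) (fun y => u y.1) _

/-- The integer vector `g` is primitive and spans the direction `e`, with `⟨e, g⟩ = 1`. The integer
`m`, with `2 e = m g` and `m ⟨g, g⟩ = 2`, makes `y ↦ y - m ⟨g, y⟩ g` the lattice reflection that
reverses the lines of direction `e`. -/
structure IsReflectionVector (e : Fin d → ℝ) (g : ZLat d) (m : ℤ) : Prop where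
  two_mul_apply : ∀ i, 2 * e i = m * g i
  mul_dotProduct_self : m * (g ⬝ᵥ g) = 2
  exists_eq_one : ∃ i, g i = 1

namespace IsReflectionVector

variable {g : ZLat d} {m : ℤ}

lemma pairing_eq (hg : IsReflectionVector e g m) (x : ZLat d) :
    pairing e x = m * (g ⬝ᵥ x) := by
  have h : 2 * ∑ i, e i * (x i : ℝ) = (m * (g ⬝ᵥ x) : ℤ) := by
    simp only [dotProduct, Finset.mul_sum, Int.cast_sum, Int.cast_mul, ← mul_assoc,
      hg.two_mul_apply]
  rw [pairing, h, Int.floor_intCast]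

lemma pairing_add_zsmul (hg : IsReflectionVector e g m) (x : ZLat d) (k : ℤ) :
    pairing e (x + k • g) = pairing e x + 2 * k := by
  rw [hg.pairing_eq, hg.pairing_eq, dotProduct_add, dotProduct_smul, smul_eq_mul]
  linear_combination k * hg.mul_dotProduct_self

lemma sameLine_iff (hg : IsReflectionVector e g m) {x y : ZLat d} :
    sameLine e x y ↔ ∃ k : ℤ, x + k • g = y := by
  constructor
  · rintro ⟨c, hc⟩
    obtain ⟨i, hi⟩ := hg.exists_eq_one
    have hc' (j : Fin d) : 2 * ((x j : ℝ) - y j) = c * m * g j := by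
      have := congrFun hc j
      simp only [Pi.smul_apply, smul_eq_mul] at this
      linear_combination 2 * this + c * hg.two_mul_apply j
    refine ⟨y i - x i, funext fun j => ?_⟩
    have hj : ((x j + (y i - x i) * g j : ℤ) : ℝ) = y j := by
      have hci := hc' i
      rw [hi] at hci
      push_cast at hci ⊢
      linear_combination (1 / 2) * hc' j - (g j / 2 : ℝ) * hci
    exact_mod_cast hj
  · rintro ⟨k, rfl⟩
    have hm : (m : ℝ) ≠ 0 := by
      rintro h
      simpa [Int.cast_eq_zero.1 h] using hg.mul_dotProduct_self
    refine ⟨-(2 * k / m), funext fun j => ?_⟩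
    simp only [Pi.add_apply, Pi.smul_apply, smul_eq_mul, Int.cast_add, Int.cast_mul]
    field_simp
    linear_combination k * hg.two_mul_apply j

lemma stepR_apply (hg : IsReflectionVector e g m) (u : ZLat d → NNReal) (x : ZLat d) :
    stepR e u x = nthLargest (fun k : ℤ => u (x + k • g)) (posIdx (pairing e x)) := by
  obtain ⟨i, hi⟩ := hg.exists_eq_one
  let line : ℤ ≃ {y : ZLat d // sameLine e x y} :=
    Equiv.ofBijective (fun k => ⟨x + k • g, hg.sameLine_iff.2 ⟨k, rfl⟩⟩)
      ⟨fun k l hkl => by simpa [hi] using congrFun (congrArg Subtype.val hkl) i,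
        fun ⟨y, hy⟩ => (hg.sameLine_iff.1 hy).imp fun _ hk => Subtype.ext hk⟩
  exact (nthLargest_comp_equiv line (fun y => u y.1) _).symm

end IsReflectionVector

/-- Along each line of direction `e`, the value of `u` decreases with the distance to the hyperplane
orthogonal to `e`; such functions are left unchanged by `R_e`. -/
def SymmDecreasing (e : Fin d → ℝ) (u : ZLat d → NNReal) : Prop :=
  ∀ x y, sameLine e x y → |pairing e x| ≤ |pairing e y| → u y ≤ u x

lemma SymmDecreasing.add {u v : ZLat d → NNReal} (hu : SymmDecreasing e u)
    (hv : SymmDecreasing e v) : SymmDecreasing e (u + v) :=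
  fun x y hxy hp => add_le_add (hu x y hxy hp) (hv x y hxy hp)

lemma SymmDecreasing.stepR_eq {u : ZLat d → NNReal} {g : ZLat d} {m : ℤ}
    (hu : SymmDecreasing e u) (hg : IsReflectionVector e g m) : stepR e u = u := by
  funext x
  have hanti (k l : ℤ) (hkl : posIdx (pairing e x + 2 * k) ≤ posIdx (pairing e x + 2 * l)) :
      u (x + l • g) ≤ u (x + k • g) := by
    refine hu _ _ (hg.sameLine_iff.2 ⟨l - k, by rw [sub_smul]; abel⟩) ?_
    rw [hg.pairing_add_zsmul, hg.pairing_add_zsmul]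
    exact abs_le_abs_of_posIdx_le (by omega) hkl
  have := nthLargest_eq_of_bijOn (bijOn_posIdx_add_two_mul (pairing e x)) hanti 0
  simpa only [hg.stepR_apply, mul_zero, add_zero, zero_smul] using this

lemma IsReflectionVector.symmDecreasing_single_zero {g : ZLat d} {m : ℤ}
    (hg : IsReflectionVector e g m) (b : NNReal) :
    SymmDecreasing e (Pi.single (0 : ZLat d) b) := by
  intro x y hxy hp
  obtain rfl | hy := eq_or_ne y 0
  · obtain ⟨k, hk⟩ := hg.sameLine_iff.1 hxy
    have hpk := hg.pairing_add_zsmul x k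
    have hp0 : pairing e (0 : ZLat d) = 0 := by rw [hg.pairing_eq, dotProduct_zero, mul_zero]
    rw [hp0, abs_zero, abs_nonpos_iff] at hp
    obtain rfl : k = 0 := by rw [hk] at hpk; omega
    rw [zero_smul, add_zero] at hk
    rw [hk]
  · rw [Pi.single_eq_of_ne hy]
    exact zero_le

end Step

section Box

variable {d : ℕ} {R : ℕ}

/-- The lattice cube `[-R, R]^d`. -/
def box (d R : ℕ) : Finset (ZLat d) := Finset.Icc (fun _ => -(R : ℤ)) (fun _ => R)

lemma mem_box {x : ZLat d} : x ∈ box d R ↔ ∀ i, |x i| ≤ R := by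
  simp only [box, Finset.mem_Icc, Pi.le_def, ← forall_and, abs_le]

lemma zero_mem_box : (0 : ZLat d) ∈ box d R := by simp [mem_box]

lemma single_mem_box {i : Fin d} {n : ℤ} (hn : |n| ≤ R) : (Pi.single i n : ZLat d) ∈ box d R := by
  refine mem_box.2 fun j => ?_
  obtain rfl | hj := eq_or_ne j i
  · rwa [Pi.single_eq_same]
  · simp [hj]

lemma isReflectionVector_stdVec (i : Fin d) :
    IsReflectionVector (stdVec d i) (Pi.single i 1) 2 where
  two_mul_apply j := by simp [stdVec, Pi.single_apply]
  mul_dotProduct_self := by simp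
  exists_eq_one := ⟨i, Pi.single_eq_same i 1⟩

lemma isReflectionVector_diagonal {i j : Fin d} (hij : i ≠ j) (σ : ℤˣ) :
    IsReflectionVector (fun k => (stdVec d i k + (σ : ℤ) * stdVec d j k) / 2)
      (Pi.single i 1 + Pi.single j (σ : ℤ)) 1 where
  two_mul_apply k := by
    simp only [stdVec, Pi.add_apply, Pi.single_apply]
    split_ifs <;> push_cast <;> ring
  mul_dotProduct_self := by
    obtain rfl | rfl := Int.units_eq_one_or σ <;> simp [hij, hij.symm]
  exists_eq_one := ⟨i, by simp [hij]⟩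

lemma exists_abs_reflection_stdVec (i : Fin d) (y : ZLat d) (k : Fin d) :
    ∃ l, |(y - pairing (stdVec d i) y • (Pi.single i 1 : ZLat d)) k| = |y l| := by
  rw [(isReflectionVector_stdVec i).pairing_eq]
  refine ⟨k, ?_⟩
  obtain rfl | hki := eq_or_ne k i
  · have : y k - 2 * y k = -y k := by ring
    simp [this]
  · simp [hki]

lemma exists_abs_reflection_diagonal {i j : Fin d} (hij : i ≠ j) (σ : ℤˣ) (y : ZLat d)
    (k : Fin d) :
    ∃ l, |(y - pairing (fun k => (stdVec d i k + (σ : ℤ) * stdVec d j k) / 2) y •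
      (Pi.single i 1 + Pi.single j (σ : ℤ) : ZLat d)) k| = |y l| := by
  rw [(isReflectionVector_diagonal hij σ).pairing_eq]
  obtain rfl | hki := eq_or_ne k i
  · refine ⟨j, ?_⟩
    obtain rfl | rfl := Int.units_eq_one_or σ <;> simp [hij, add_dotProduct]
  obtain rfl | hkj := eq_or_ne k j
  · refine ⟨i, ?_⟩
    obtain rfl | rfl := Int.units_eq_one_or σ <;> simp [hki, add_dotProduct]
  · exact ⟨k, by simp [hki, hkj]⟩

lemma eq_stdVec_or_eq_diagonal {e : Fin d → ℝ} (he : e ∈ Evec d) :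
    (∃ i, e = stdVec d i) ∨ ∃ i j, i ≠ j ∧ ∃ σ : ℤˣ,
      e = fun k => (stdVec d i k + (σ : ℤ) * stdVec d j k) / 2 := by
  obtain hstd | ⟨i, j, hij, rfl⟩ | ⟨i, j, hij, rfl⟩ := he
  · exact Or.inl hstd
  · exact Or.inr ⟨i, j, hij.ne, 1, by simp⟩
  · exact Or.inr ⟨i, j, hij.ne, -1, by simp [sub_eq_add_neg]⟩

lemma exists_isReflectionVector {e : Fin d → ℝ} (he : e ∈ Evec d) :
    ∃ g m, IsReflectionVector e g m ∧
      ∀ (y : ZLat d) (k : Fin d), ∃ l, |(y - pairing e y • g) k| = |y l| := by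
  obtain ⟨i, rfl⟩ | ⟨i, j, hij, σ, rfl⟩ := eq_stdVec_or_eq_diagonal he
  · exact ⟨_, _, isReflectionVector_stdVec i, exists_abs_reflection_stdVec i⟩
  · exact ⟨_, _, isReflectionVector_diagonal hij σ, exists_abs_reflection_diagonal hij σ⟩

lemma add_zsmul_mem_box {y g : ZLat d} {p k : ℤ} (hy : y ∈ box d R) (hyp : y - p • g ∈ box d R)
    (hk : |p + 2 * k| ≤ |p|) : y + k • g ∈ box d R := by
  refine mem_box.2 fun l => ?_
  have h₁ := abs_le.1 (mem_box.1 hy l)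
  have h₂ := abs_le.1 (mem_box.1 hyp l)
  have hkp : k * (k + p) ≤ 0 := by linarith [sq_le_sq.2 hk]
  have hbetween : k * g l * (k * g l + p * g l) ≤ 0 :=
    calc k * g l * (k * g l + p * g l) = g l ^ 2 * (k * (k + p)) := by ring
      _ ≤ 0 := mul_nonpos_of_nonneg_of_nonpos (sq_nonneg _) hkp
  simp only [Pi.add_apply, Pi.sub_apply, Pi.smul_apply, smul_eq_mul, abs_le] at h₂ ⊢
  constructor <;> nlinarith

lemma symmDecreasing_indicator_box {e : Fin d → ℝ} {g : ZLat d} {m : ℤ}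
    (hg : IsReflectionVector e g m)
    (hbox : ∀ (y : ZLat d) (k : Fin d), ∃ l, |(y - pairing e y • g) k| = |y l|) (a : NNReal) :
    SymmDecreasing e ((box d R : Set (ZLat d)).indicator fun _ => a) := by
  intro x y hxy hp
  by_cases hy : y ∈ box d R
  · obtain ⟨k, rfl⟩ := hg.sameLine_iff.1 ((sameLine_equivalence e).symm hxy)
    have hrefl : y - pairing e y • g ∈ box d R := mem_box.2 fun i => by
      obtain ⟨l, hl⟩ := hbox y i
      exact hl ▸ mem_box.1 hy l
    rw [hg.pairing_add_zsmul] at hp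
    have hx : y + k • g ∈ box d R := add_zsmul_mem_box hy hrefl hp
    rw [Set.indicator_of_mem (Finset.mem_coe.2 hx), Set.indicator_of_mem (Finset.mem_coe.2 hy)]
  · simp [hy]

end Box

section RieszSum

variable {α : Type*}

/-- The Riesz functional `∑_{x,y} G(u(x), v(y)) K(x,y)`; being a `finsum`, it is meaningful only
when the summand has finite support. -/
def rieszSum (G : ℝ → ℝ → ℝ) (K : α → α → ℝ) (u v : α → NNReal) : ℝ :=
  ∑ᶠ x, ∑ᶠ y, G (u x) (v y) * K x y

lemma rieszSum_eq_sum {G : ℝ → ℝ → ℝ}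
    (hG : ∀ s t : ℝ, 0 ≤ s → 0 ≤ t → G s 0 = 0 ∧ G 0 t = 0) (K : α → α → ℝ)
    {B : Finset α} {u v : α → NNReal} (hu : Function.support u ⊆ B)
    (hv : Function.support v ⊆ B) :
    rieszSum G K u v = ∑ x ∈ B, ∑ y ∈ B, G (u x) (v y) * K x y := by
  have hinner (x : α) :
      ∑ᶠ y, G (u x) (v y) * K x y = ∑ y ∈ B, G (u x) (v y) * K x y := by
    refine finsum_eq_sum_of_support_subset _ fun y hy => hv fun h0 => hy ?_
    simp only [h0, NNReal.coe_zero, (hG _ 0 (u x).coe_nonneg le_rfl).1, zero_mul]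
  rw [rieszSum, finsum_congr hinner]
  refine finsum_eq_sum_of_support_subset _ fun x hx => hu fun h0 => hx ?_
  simp only [h0, NNReal.coe_zero, (hG 0 _ le_rfl (v _).coe_nonneg).2, zero_mul,
    Finset.sum_const_zero]

end RieszSum

section Bump

variable {α : Type*} [DecidableEq α] {B : Finset α} {p q : α} {a b : NNReal}

/-- The test function `a 𝟙_B + b 𝟙_{p}`. -/
def bump (B : Finset α) (p : α) (a b : NNReal) : α → NNReal :=
  (B : Set α).indicator (fun _ => a) + Pi.single p b

lemma bump_apply_of_mem {x : α} (hx : x ∈ B) : bump B p a b x = if x = p then a + b else a := by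
  rw [bump, Pi.add_apply, Set.indicator_of_mem (Finset.mem_coe.2 hx), Pi.single_apply]
  split_ifs <;> simp

lemma bump_support_subset (hp : p ∈ B) : Function.support (bump B p a b) ⊆ B := by
  intro x hx
  by_contra hxB
  have hxp : x ≠ p := fun h => hxB (Finset.mem_coe.2 (h ▸ hp))
  refine hx ?_
  rw [bump, Pi.add_apply, Set.indicator_of_notMem hxB, Pi.single_eq_of_ne hxp, add_zero]

lemma bump_comp_swap (hp : p ∈ B) (hq : q ∈ B) : bump B p a b ∘ Equiv.swap p q = bump B q a b := by
  funext x
  rw [Function.comp_apply, Equiv.swap_apply_def]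
  by_cases hxp : x = p
  · simp [hxp, bump_apply_of_mem hp, bump_apply_of_mem hq, eq_comm]
  by_cases hxq : x = q
  · subst hxq
    simp [hxp, bump_apply_of_mem hp, bump_apply_of_mem hq]
  · simp [hxp, hxq, bump]

lemma sum_comp_bump_mul (hp : p ∈ B) (f : ℝ → ℝ) (k : α → ℝ) :
    ∑ x ∈ B, f (bump B p a b x) * k x = f a * ∑ x ∈ B, k x + (f (a + b) - f a) * k p := by
  have hterm : ∀ x ∈ B, f (bump B p a b x) * k x =
      f a * k x + if x = p then (f (a + b) - f a) * k x else 0 := by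
    intro x hx
    rw [bump_apply_of_mem hx]
    split_ifs
    · push_cast
      ring
    · ring
  rw [Finset.sum_congr rfl hterm, Finset.sum_add_distrib, Finset.sum_ite_eq', if_pos hp,
    Finset.mul_sum]

lemma rieszSum_bump_sub_rieszSum_bump {G : ℝ → ℝ → ℝ}
    (hG : ∀ s t : ℝ, 0 ≤ s → 0 ≤ t → G s 0 = 0 ∧ G 0 t = 0) (K : α → α → ℝ)
    (hp : p ∈ B) (hq : q ∈ B) (s s₀ t t₀ : NNReal) :
    rieszSum G K (bump B p s s₀) (bump B p t t₀) - rieszSum G K (bump B p s s₀) (bump B q t t₀) =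
      (G s (t + t₀) - G s t) * ∑ x ∈ B, (K x p - K x q) +
        (G (s + s₀) (t + t₀) - G (s + s₀) t - (G s (t + t₀) - G s t)) * (K p p - K p q) := by
  have hu := bump_support_subset (a := s) (b := s₀) hp
  rw [rieszSum_eq_sum hG K hu (bump_support_subset hp),
    rieszSum_eq_sum hG K hu (bump_support_subset hq), ← Finset.sum_sub_distrib,
    ← sum_comp_bump_mul hp (fun a => G a (t + t₀) - G a t)]
  refine Finset.sum_congr rfl fun x _ => ?_
  rw [sum_comp_bump_mul hp, sum_comp_bump_mul hq]
  ring

end Bump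

section Rearrangement

variable {d : ℕ}

lemma mem_Evec_of_mem_EvecList {e : Fin d → ℝ} (he : e ∈ EvecList d) : e ∈ Evec d := by
  simp only [EvecList, List.mem_append, List.mem_map, List.mem_flatMap, List.mem_filterMap,
    List.mem_finRange, true_and] at he
  obtain (⟨i, rfl⟩ | ⟨i, j, h⟩) | ⟨i, j, h⟩ := he
  · exact Or.inl ⟨i, rfl⟩
  · split_ifs at h with hij
    exact Or.inr (Or.inl ⟨i, j, hij, (Option.some.inj h).symm⟩)
  · split_ifs at h with hij
    exact Or.inr (Or.inr ⟨i, j, hij, (Option.some.inj h).symm⟩)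

lemma EvecList_getD_mod_mem_Evec [NeZero d] (k : ℕ) :
    (EvecList d).getD (k % (EvecList d).length) 0 ∈ Evec d := by
  have hlen : 0 < (EvecList d).length := by simp [EvecList, NeZero.pos d]
  rw [List.getD_eq_getElem _ _ (Nat.mod_lt k hlen)]
  exact mem_Evec_of_mem_EvecList (List.getElem_mem _)

lemma EvecList_getD_zero [NeZero d] : (EvecList d).getD 0 0 = stdVec d 0 := by
  obtain ⟨m, rfl⟩ := Nat.exists_eq_succ_of_ne_zero (NeZero.ne d)
  rw [EvecList, List.finRange_succ]
  rfl

lemma RZd_eq_of_stepR [NeZero d] {u w : ZLat d → NNReal} (hu : stepR (stdVec d 0) u = w)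
    (hw : ∀ e ∈ Evec d, stepR e w = w) : RZd d u = w := by
  have hiter (k : ℕ) : iterR d u (k + 1) = w := by
    induction k with
    | zero => rw [iterR, Nat.zero_mod, EvecList_getD_zero, iterR, hu]
    | succ k ih => rw [iterR, ih, hw _ (EvecList_getD_mod_mem_Evec _)]
  funext x
  refine Tendsto.limUnder_eq ((tendsto_add_atTop_iff_nat 1).1 ?_)
  simp only [hiter, tendsto_const_nhds]

lemma stepR_bump_eq_of_sameLine {B : Finset (ZLat d)} {p q : ZLat d} {e : Fin d → ℝ} (hp : p ∈ B)
    (hq : q ∈ B) (hpq : sameLine e p q) (a b : NNReal) :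
    stepR e (bump B q a b) = stepR e (bump B p a b) := by
  rw [← bump_comp_swap hp hq]
  refine stepR_comp_equiv (fun y => ?_) _
  rw [Equiv.swap_apply_def]
  split_ifs with hyp hyq
  · exact hyp ▸ hpq
  · exact hyq ▸ (sameLine_equivalence e).symm hpq
  · exact (sameLine_equivalence e).refl y

variable {R : ℕ}

lemma stepR_bump_box_zero {e : Fin d → ℝ} (he : e ∈ Evec d) (a b : NNReal) :
    stepR e (bump (box d R) 0 a b) = bump (box d R) 0 a b := by
  obtain ⟨g, m, hg, hbox⟩ := exists_isReflectionVector he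
  exact ((symmDecreasing_indicator_box hg hbox a).add (hg.symmDecreasing_single_zero b)).stepR_eq hg

lemma RZd_bump_box_zero [NeZero d] (a b : NNReal) :
    RZd d (bump (box d R) 0 a b) = bump (box d R) 0 a b :=
  RZd_eq_of_stepR (stepR_bump_box_zero (Or.inl ⟨0, rfl⟩) a b) fun _ he =>
    stepR_bump_box_zero he a b

lemma RZd_bump_box_single [NeZero d] {n : ℤ} (hn : |n| ≤ R) (a b : NNReal) :
    RZd d (bump (box d R) (Pi.single 0 n) a b) = bump (box d R) 0 a b := by
  refine RZd_eq_of_stepR ?_ fun e he => stepR_bump_box_zero he a b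
  have hline : sameLine (stdVec d 0) 0 (Pi.single 0 n) :=
    (isReflectionVector_stdVec 0).sameLine_iff.2 ⟨n, by simp [← Pi.single_smul]⟩
  rw [stepR_bump_eq_of_sameLine zero_mem_box (single_mem_box hn) hline,
    stepR_bump_box_zero (Or.inl ⟨0, rfl⟩)]

lemma defect_nonneg_of_rieszSum_le [NeZero d] {G : ℝ → ℝ → ℝ}
    (hG : ∀ s t : ℝ, 0 ≤ s → 0 ≤ t → G s 0 = 0 ∧ G 0 t = 0) {K : ZLat d → ZLat d → ℝ}
    (hineq : ∀ u v : ZLat d → NNReal, (Function.support u).Finite → (Function.support v).Finite →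
      rieszSum G K u v ≤ rieszSum G K (RZd d u) (RZd d v))
    {n : ℤ} (hn : |n| ≤ R) (s s₀ t t₀ : NNReal) :
    0 ≤ (G s (t + t₀) - G s t) * ∑ x ∈ box d R, (K x 0 - K x (Pi.single 0 n)) +
      (G (s + s₀) (t + t₀) - G (s + s₀) t - (G s (t + t₀) - G s t)) *
        (K 0 0 - K 0 (Pi.single 0 n)) := by
  have hq : (Pi.single 0 n : ZLat d) ∈ box d R := single_mem_box hn
  have hle := hineq (bump (box d R) 0 s s₀) (bump (box d R) (Pi.single 0 n) t t₀)
    ((box d R).finite_toSet.subset (bump_support_subset zero_mem_box))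
    ((box d R).finite_toSet.subset (bump_support_subset hq))
  rw [RZd_bump_box_zero, RZd_bump_box_single hn, ← sub_nonneg,
    rieszSum_bump_sub_rieszSum_bump hG K zero_mem_box hq] at hle
  exact hle

end Rearrangement

section Decay

lemma tendsto_zero_of_tendsto_pow_mul {k : ℕ} {h : ℕ → ℝ}
    (hlim : Tendsto (fun r : ℕ => (r : ℝ) ^ k * h r) atTop (𝓝 0)) : Tendsto h atTop (𝓝 0) := by
  refine squeeze_zero_norm' ?_ (tendsto_zero_iff_norm_tendsto_zero.1 hlim)
  filter_upwards [eventually_ge_atTop 1] with r hr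
  rw [norm_mul]
  refine le_mul_of_one_le_left (norm_nonneg _) ?_
  rw [norm_pow, Real.norm_natCast]
  exact one_le_pow₀ (by exact_mod_cast hr)

lemma exists_natCast_lt_apply_zero {H : ℝ → ℝ} (hH : AntitoneOn H (Set.Ici 0))
    (hne : ∃ r : ℝ, 0 ≤ r ∧ H r ≠ 0) (hlim : Tendsto (fun k : ℕ => H k) atTop (𝓝 0)) :
    ∃ n : ℕ, H n < H 0 := by
  obtain ⟨r, hr, hHr⟩ := hne
  have hHr_nonneg : 0 ≤ H r := by
    refine le_of_tendsto hlim ?_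
    filter_upwards [eventually_ge_atTop ⌈r⌉₊] with k hk
    exact hH hr (Set.mem_Ici.2 k.cast_nonneg) (Nat.ceil_le.1 hk)
  have hH0 : 0 < H 0 := (hHr_nonneg.lt_of_ne' hHr).trans_le (hH Set.self_mem_Ici hr hr)
  exact (hlim.eventually (gt_mem_nhds hH0)).exists

end Decay

section BoundaryLayer

lemma abs_sum_sub_sum_le_card_sdiff_mul {α : Type*} [DecidableEq α] {A B : Finset α} {f : α → ℝ}
    {M : ℝ} (hcard : A.card = B.card) (hf : ∀ x ∈ symmDiff A B, f x ∈ Set.Icc 0 M) :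
    |∑ x ∈ A, f x - ∑ x ∈ B, f x| ≤ (A \ B).card * M := by
  have hsum {S : Finset α} (hS : S ⊆ symmDiff A B) :
      0 ≤ ∑ x ∈ S, f x ∧ ∑ x ∈ S, f x ≤ S.card * M :=
    ⟨Finset.sum_nonneg fun x hx => (hf x (hS hx)).1,
      (Finset.sum_le_card_nsmul S f M fun x hx => (hf x (hS hx)).2).trans_eq (nsmul_eq_mul _ _)⟩
  have hAB := hsum (S := A \ B) le_sup_left
  have hBA := hsum (S := B \ A) le_sup_right
  rw [← Finset.card_sdiff_comm hcard] at hBA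
  rw [← Finset.sum_sdiff_sub_sum_sdiff]
  exact abs_sub_le_of_nonneg_of_le hAB.1 hAB.2 hBA.1 hBA.2

variable {d R : ℕ}

lemma latDist_sub_zero (x y : ZLat d) : latDist (x - y) 0 = latDist x y := by simp [latDist]

lemma natAbs_le_latDist_zero (x : ZLat d) (i : Fin d) : (x i).natAbs ≤ latDist x 0 := by
  simpa [latDist] using
    Finset.single_le_sum (fun j _ => Nat.zero_le (x j).natAbs) (Finset.mem_univ i)

lemma latDist_self (x : ZLat d) : latDist x x = 0 := by simp [latDist]

lemma latDist_zero_single (i : Fin d) (n : ℤ) : latDist 0 (Pi.single i n) = n.natAbs := by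
  rw [latDist, Fintype.sum_eq_single i fun j hj => by simp [hj]]
  simp

lemma lt_abs_apply_add_of_mem_box {x : ZLat d} {i : Fin d} {n : ℤ} (hx : x ∈ box d R)
    (hxn : x + Pi.single i n ∉ box d R) : R < |x i + n| := by
  rw [mem_box] at hx hxn
  push Not at hxn
  obtain ⟨j, hj⟩ := hxn
  obtain rfl | hji := eq_or_ne j i
  · simpa using hj
  · simp only [Pi.add_apply, Pi.single_eq_of_ne hji, add_zero] at hj
    exact absurd (hx j) hj.not_ge

lemma mem_map_subRight {A : Finset (ZLat d)} {q x : ZLat d} :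
    x ∈ A.map (Equiv.subRight q).toEmbedding ↔ x + q ∈ A := by
  simp

lemma card_box_sdiff_map_subRight_le (r n : ℕ) (i : Fin d) :
    (box d (r + n) \ (box d (r + n)).map
      (Equiv.subRight (Pi.single i (n : ℤ))).toEmbedding).card ≤
        n * (2 * (r + n) + 1) ^ (d - 1) := by
  have hsub :
      box d (r + n) \ (box d (r + n)).map (Equiv.subRight (Pi.single i (n : ℤ))).toEmbedding ⊆
        Finset.Icc (Function.update (fun _ => -((r + n : ℕ) : ℤ)) i (r + 1))
          fun _ => (r + n : ℕ) := by
    intro x hx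
    obtain ⟨hx, hxn⟩ := Finset.mem_sdiff.1 hx
    have hlt := lt_abs_apply_add_of_mem_box hx (mt mem_map_subRight.2 hxn)
    have hxi := abs_le.1 (mem_box.1 hx i)
    refine Finset.mem_Icc.2 ⟨update_le_iff.2 ⟨?_, fun j _ => ?_⟩, fun j => ?_⟩
    · rw [lt_abs] at hlt
      push_cast at hlt hxi
      omega
    · exact (abs_le.1 (mem_box.1 hx j)).1
    · exact (abs_le.1 (mem_box.1 hx j)).2
  refine (Finset.card_le_card hsub).trans_eq ?_
  rw [Pi.card_Icc, ← Finset.mul_prod_erase _ _ (Finset.mem_univ i)]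
  congr 1
  · rw [Function.update_self, Int.card_Icc]
    omega
  · have hside : ∀ j ∈ Finset.univ.erase i,
        (Finset.Icc (Function.update (fun _ => -((r + n : ℕ) : ℤ)) i (r + 1) j)
          ((r + n : ℕ) : ℤ)).card = 2 * (r + n) + 1 := by
      intro j hj
      rw [Function.update_of_ne (Finset.ne_of_mem_erase hj), Int.card_Icc]
      omega
    rw [Finset.prod_congr rfl hside, Finset.prod_const,
      Finset.card_erase_of_mem (Finset.mem_univ i), Finset.card_univ, Fintype.card_fin]

variable {h : ℕ → ℝ}

lemma abs_sum_box_latDist_sub_le (hh : Antitone h) (hpos : ∀ k, 0 ≤ h k) (r n : ℕ) (i : Fin d) :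
    |∑ x ∈ box d (r + n), (h (latDist x 0) - h (latDist x (Pi.single i (n : ℤ))))| ≤
      n * (2 * (r + n) + 1) ^ (d - 1) * h r := by
  set A := box d (r + n)
  set q : ZLat d := Pi.single i (n : ℤ)
  set B := A.map (Equiv.subRight q).toEmbedding
  have hshift : ∑ x ∈ A, h (latDist x q) = ∑ x ∈ B, h (latDist x 0) := by
    simp only [B, Finset.sum_map, Equiv.coe_toEmbedding, Equiv.subRight_apply, latDist_sub_zero]
  have hfar : ∀ x ∈ symmDiff A B, r ≤ (x i).natAbs := by
    intro x hx
    obtain ⟨hA, hB⟩ | ⟨hB, hA⟩ := Finset.mem_symmDiff.1 hx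
    · have hlt := lt_abs_apply_add_of_mem_box hA (mt mem_map_subRight.2 hB)
      rw [Int.abs_eq_natAbs] at hlt
      omega
    · have hlt := lt_abs_apply_add_of_mem_box (i := i) (n := -n) (mem_map_subRight.1 hB)
        (by simpa [q, ← Pi.single_add, add_assoc] using hA)
      simp only [q, Pi.add_apply, Pi.single_eq_same, add_neg_cancel_right, Int.abs_eq_natAbs] at hlt
      omega
  have hf : ∀ x ∈ symmDiff A B, h (latDist x 0) ∈ Set.Icc 0 (h r) :=
    fun x hx => ⟨hpos _, hh ((hfar x hx).trans (natAbs_le_latDist_zero x i))⟩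
  rw [Finset.sum_sub_distrib, hshift]
  refine (abs_sum_sub_sum_le_card_sdiff_mul (Finset.card_map _).symm hf).trans ?_
  refine mul_le_mul_of_nonneg_right ?_ (hpos r)
  exact_mod_cast card_box_sdiff_map_subRight_le r n i

open Asymptotics in
lemma tendsto_sum_box_latDist_sub (hh : Antitone h)
    (hlim : Tendsto (fun r : ℕ => (r : ℝ) ^ (d - 1) * h r) atTop (𝓝 0)) (n : ℕ) (i : Fin d) :
    Tendsto (fun r => ∑ x ∈ box d (r + n),
      (h (latDist x 0) - h (latDist x (Pi.single i (n : ℤ))))) atTop (𝓝 0) := by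
  have hpos : ∀ k, 0 ≤ h k := hh.le_of_tendsto (tendsto_zero_of_tendsto_pow_mul hlim)
  have hside : (fun r : ℕ => (2 * (r + n) + 1 : ℝ)) =O[atTop] fun r : ℕ => (r : ℝ) := by
    refine IsBigO.of_bound (2 * n + 3) ?_
    filter_upwards [eventually_ge_atTop 1] with r hr
    have hr' : (1 : ℝ) ≤ r := by exact_mod_cast hr
    rw [Real.norm_of_nonneg (by positivity), Real.norm_of_nonneg (by positivity)]
    nlinarith [n.cast_nonneg (α := ℝ)]
  have hbound : (fun r : ℕ => n * (2 * (r + n) + 1 : ℝ) ^ (d - 1) * h r) =O[atTop]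
      fun r : ℕ => (r : ℝ) ^ (d - 1) * h r :=
    ((hside.pow _).const_mul_left _).mul (isBigO_refl h _)
  exact squeeze_zero_norm (fun r => abs_sum_box_latDist_sub_le hh hpos r n i)
    (hbound.trans_tendsto hlim)

end BoundaryLayer

theorem stmt12_general (d : ℕ) [NeZero d] (H : ℝ → ℝ)
    (hmono : ∀ a b : ℝ, 0 ≤ a → a ≤ b → H b ≤ H a)
    (hne : ∃ r : ℝ, 0 ≤ r ∧ H r ≠ 0)
    (hlim : Tendsto (fun r : ℝ => r ^ (d - 1) * H r) atTop (𝓝 0))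
    (G : ℝ → ℝ → ℝ)
    (hG0 : ∀ s t : ℝ, 0 ≤ s → 0 ≤ t → G s 0 = 0 ∧ G 0 t = 0)
    (hineq : ∀ u v : ZLat d → NNReal,
      (Function.support u).Finite → (Function.support v).Finite →
      (∑ᶠ x : ZLat d, ∑ᶠ y : ZLat d, G (u x) (v y) * H (latDist x y)) ≤
      ∑ᶠ x : ZLat d, ∑ᶠ y : ZLat d, G (RZd d u x) (RZd d v y) * H (latDist x y)) :
    ∀ s t s₀ t₀ : ℝ, 0 ≤ s → 0 ≤ t → 0 ≤ s₀ → 0 ≤ t₀ →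
      G (s + s₀) t + G s (t + t₀) ≤ G (s + s₀) (t + t₀) + G s t := by
  intro s t s₀ t₀ hs ht hs₀ ht₀
  lift s to NNReal using hs
  lift t to NNReal using ht
  lift s₀ to NNReal using hs₀
  lift t₀ to NNReal using ht₀
  have hH : AntitoneOn H (Set.Ici 0) := fun a ha b _ hab => hmono a b ha hab
  have hHnat : Antitone fun k : ℕ => H k := fun k l hkl =>
    hmono k l k.cast_nonneg (Nat.cast_le.2 hkl)
  have hlimNat := hlim.comp tendsto_natCast_atTop_atTop
  obtain ⟨n, hn⟩ := exists_natCast_lt_apply_zero hH hne (tendsto_zero_of_tendsto_pow_mul hlimNat)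
  have hdefect (r : ℕ) := defect_nonneg_of_rieszSum_le (K := fun x y => H (latDist x y)) hG0 hineq
    (R := r + n) (n := n) (by simp) s s₀ t t₀
  have hlayer := tendsto_sum_box_latDist_sub hHnat hlimNat n 0
  have hnonneg := ge_of_tendsto' ((hlayer.const_mul _).add_const _) hdefect
  simp only [mul_zero, zero_add, latDist_zero_single, latDist_self, Int.natAbs_natCast,
    Nat.cast_zero] at hnonneg
  have := nonneg_of_mul_nonneg_left hnonneg (sub_pos.2 hn)
  linarith

/-- Necessity of supermodularity: if the discrete Riesz inequality holds for all
finitely supported u, v on ℤ^d, then G must be supermodular on [0,∞)². -/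
theorem stmt12 (d : ℕ) (hd : 2 ≤ d) (H : ℝ → ℝ)
    (hmono : ∀ a b : ℝ, 0 ≤ a → a ≤ b → H b ≤ H a)
    (hne : ∃ r : ℝ, 0 ≤ r ∧ H r ≠ 0)
    (hlim : Tendsto (fun r : ℝ => r ^ (d - 1) * H r) atTop (𝓝 0))
    (G : ℝ → ℝ → ℝ) (hmeas : Measurable fun p : ℝ × ℝ => G p.1 p.2)
    (hG0 : ∀ s t : ℝ, 0 ≤ s → 0 ≤ t → G s 0 = 0 ∧ G 0 t = 0)
    (hineq : ∀ u v : ZLat d → NNReal,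
      (Function.support u).Finite → (Function.support v).Finite →
      (∑ᶠ x : ZLat d, ∑ᶠ y : ZLat d, G (u x) (v y) * H (latDist x y)) ≤
      ∑ᶠ x : ZLat d, ∑ᶠ y : ZLat d, G (RZd d u x) (RZd d v y) * H (latDist x y)) :
    ∀ s t s₀ t₀ : ℝ, 0 ≤ s → 0 ≤ t → 0 ≤ s₀ → 0 ≤ t₀ →
      G (s + s₀) t + G s (t + t₀) ≤ G (s + s₀) (t + t₀) + G s t := by
  have : NeZero d := ⟨by omega⟩
  exact stmt12_general d H hmono hne hlim G hG0 hineq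

end
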